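/- arXiv:1509.08224 — 2 statements merged into one kernel-verified Lean document; each statement's English description precedes it below -/
import Mathlib

section
/- There exists c₁>0 such that for every c ∈ (0,c₁) there is a unique pair (y₁,y₂) with 1 < y₁ < y_c ≤ y_v(c) < y₂ satisfying the tangency system H_l'(y₁) = ∂H_r/∂y(y₂;c) and H_l(y₁) − H_l'(y₁)·y₁ = H_r(y₂;c) − ∂H_r/∂y(y₂;c)·y₂; moreover this pair satisfies y₁ < Ψ(f₀). -/
/-- The double-tangency system: the tangent to H_l at y₁ and the tangent to H_r(·;c)
at y₂ have the same gradient and the same vertical intercept. -/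
def TangencySystem (Hl Hrc : ℝ → ℝ) (y₁ y₂ : ℝ) : Prop :=
  deriv Hl y₁ = deriv Hrc y₂ ∧
  Hl y₁ - deriv Hl y₁ * y₁ = Hrc y₂ - deriv Hrc y₂ * y₂

/-!
In the coordinate `x` with `y = exp (2 s x)`, `s = √(2 α)`, a function `H y = √y * h x` is convex
where `h'' - s² h ≥ 0`. For the profiles of `H_l` and `H_r` this expression is piecewise polynomial
in `x`. For small `c` it is positive between `0` and `x_c` in the case of `H_l` and on `[0, ∞)` in
the case of `H_r`. The two graphs cross at `y_c`, where `H_l` has the larger gradient. A line of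
gradient `p` is tangent to both graphs exactly when their convex conjugates agree at `p`; the
difference of the conjugates changes sign between the two gradients at `y_c`, which gives a common
tangent. It is unique: of two common tangents the steeper would lie above the other at its own left
contact point and below it at a point further right.
-/

open Filter Set Topology

section CommonTangent

variable {F G : ℝ → ℝ} {K S T : Set ℝ} {a b d p u u' v v' y z : ℝ}

theorem tangent_lt_of_strictConvexOn (hF : StrictConvexOn ℝ S F) (hy : y ∈ S) (hz : z ∈ S)
    (hd : DifferentiableAt ℝ F y) (hyz : y ≠ z) : F y + deriv F y * (z - y) < F z := by
  rcases hyz.lt_or_gt with hlt | hgt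
  · have := hF.deriv_lt_slope hy hz hlt hd
    rw [slope_def_field, lt_div_iff₀ (sub_pos.2 hlt)] at this
    linarith
  · have := hF.slope_lt_deriv hz hy hgt hd
    rw [slope_def_field, div_lt_iff₀ (sub_pos.2 hgt)] at this
    linarith

theorem tangent_le_of_strictConvexOn (hF : StrictConvexOn ℝ S F) (hy : y ∈ S) (hz : z ∈ S)
    (hd : DifferentiableAt ℝ F y) : F y + deriv F y * (z - y) ≤ F z := by
  rcases eq_or_ne y z with rfl | hyz
  · simp
  · exact (tangent_lt_of_strictConvexOn hF hy hz hd hyz).le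

theorem exists_mem_Ioo_deriv_eq (hab : a ≤ b) (hF : ∀ y ∈ Icc a b, DifferentiableAt ℝ F y)
    (hp : p ∈ Ioo (deriv F a) (deriv F b)) : ∃ y ∈ Ioo a b, deriv F y = p :=
  exists_hasDerivWithinAt_eq_of_gt_of_lt hab
    (fun y hy => (hF y hy).hasDerivAt.hasDerivWithinAt) hp.1 hp.2

/-- The convex conjugate (Legendre transform) of the restriction of `F` to `K`. -/
noncomputable def conjugateOn (K : Set ℝ) (F : ℝ → ℝ) (p : ℝ) : ℝ := ⨆ y : K, (p * y - F y)

theorem continuous_conjugateOn (hK : IsCompact K) (hF : ContinuousOn F K) :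
    Continuous (conjugateOn K F) := by
  have := isCompact_iff_compactSpace.1 hK
  have hFK : Continuous fun y : K => F y := hF.domRestrict
  have hcont : Continuous fun q : ℝ × K => q.1 * q.2 - F q.2 :=
    (continuous_fst.mul (continuous_subtype_val.comp continuous_snd)).sub
      (hFK.comp continuous_snd)
  have hsup := isCompact_univ.continuous_sSup (f := fun p (y : K) => p * y - F y) hcont
  simp only [image_univ] at hsup
  exact hsup

theorem conjugateOn_eq_of_tangent_le (hy : y ∈ K) (h : ∀ z ∈ K, F y + p * (z - y) ≤ F z) :
    conjugateOn K F p = p * y - F y := by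
  refine IsGreatest.csSup_eq ⟨⟨⟨y, hy⟩, rfl⟩, ?_⟩
  rintro - ⟨⟨z, hz⟩, rfl⟩
  linarith [h z hz]

theorem conjugateOn_deriv (hF : StrictConvexOn ℝ K F) (hy : y ∈ K)
    (hd : DifferentiableAt ℝ F y) : conjugateOn K F (deriv F y) = deriv F y * y - F y :=
  conjugateOn_eq_of_tangent_le hy fun _ hz => tangent_le_of_strictConvexOn hF hy hz hd

theorem conjugateOn_lt_conjugateOn (hF : StrictConvexOn ℝ S F) (hb : b ∈ S) (hy : y ∈ S)
    (hd : DifferentiableAt ℝ F y) (hyb : y ≠ b) (hG : StrictConvexOn ℝ T G) (hbT : b ∈ T)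
    (hdG : DifferentiableAt ℝ G b) (hFG : F b = G b) (hFG' : deriv F y = deriv G b) :
    conjugateOn T G (deriv G b) < conjugateOn S F (deriv G b) := by
  have htangent := tangent_lt_of_strictConvexOn hF hy hb hd hyb
  rw [conjugateOn_deriv hG hbT hdG, ← hFG', conjugateOn_deriv hF hy hd]
  linarith

theorem exists_tangencySystem (hab : a < b) (hbd : b < d)
    (hF : StrictConvexOn ℝ (Icc a b) F) (hG : StrictConvexOn ℝ (Icc b d) G)
    (dF : ∀ y ∈ Icc a b, DifferentiableAt ℝ F y) (dG : ∀ y ∈ Icc b d, DifferentiableAt ℝ G y)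
    (hb : F b = G b) (ha' : deriv F a < deriv G b) (hb' : deriv G b < deriv F b)
    (hd' : deriv F b < deriv G d) :
    ∃ y₁ ∈ Ioo a b, ∃ y₂ ∈ Ioo b d, TangencySystem F G y₁ y₂ := by
  have hbF : b ∈ Icc a b := right_mem_Icc.2 hab.le
  have hbG : b ∈ Icc b d := left_mem_Icc.2 hbd.le
  have hleft : conjugateOn (Icc b d) G (deriv G b) < conjugateOn (Icc a b) F (deriv G b) := by
    obtain ⟨y, hy, hy'⟩ := exists_mem_Ioo_deriv_eq hab.le dF ⟨ha', hb'⟩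
    have hyF := Ioo_subset_Icc_self hy
    exact conjugateOn_lt_conjugateOn hF hbF hyF (dF y hyF) hy.2.ne hG hbG (dG b hbG) hb hy'
  have hright : conjugateOn (Icc a b) F (deriv F b) < conjugateOn (Icc b d) G (deriv F b) := by
    obtain ⟨y, hy, hy'⟩ := exists_mem_Ioo_deriv_eq hbd.le dG ⟨hb', hd'⟩
    have hyG := Ioo_subset_Icc_self hy
    exact conjugateOn_lt_conjugateOn hG hbG hyG (dG y hyG) hy.1.ne' hF hbF (dF b hbF) hb.symm hy'
  have hcont : ContinuousOn (fun p => conjugateOn (Icc a b) F p - conjugateOn (Icc b d) G p)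
      (Icc (deriv G b) (deriv F b)) :=
    ((continuous_conjugateOn isCompact_Icc fun y hy =>
      (dF y hy).continuousAt.continuousWithinAt).sub
    (continuous_conjugateOn isCompact_Icc fun y hy =>
      (dG y hy).continuousAt.continuousWithinAt)).continuousOn
  obtain ⟨p, hp, hconj⟩ :=
    intermediate_value_Ioo' hb'.le hcont ⟨sub_neg.2 hright, sub_pos.2 hleft⟩
  obtain ⟨y₁, hy₁, rfl⟩ := exists_mem_Ioo_deriv_eq hab.le dF ⟨ha'.trans hp.1, hp.2⟩
  obtain ⟨y₂, hy₂, hslope⟩ := exists_mem_Ioo_deriv_eq hbd.le dG ⟨hp.1, hp.2.trans hd'⟩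
  have hy₁F := Ioo_subset_Icc_self hy₁
  have hy₂G := Ioo_subset_Icc_self hy₂
  refine ⟨y₁, hy₁, y₂, hy₂, hslope.symm, ?_⟩
  have hconj₁ := conjugateOn_deriv hF hy₁F (dF y₁ hy₁F)
  have hconj₂ := conjugateOn_deriv hG hy₂G (dG y₂ hy₂G)
  rw [hslope] at hconj₂ ⊢
  linarith

theorem TangencySystem.not_lt (hF : StrictConvexOn ℝ S F) (hG : StrictConvexOn ℝ T G)
    (dF : ∀ y ∈ S, DifferentiableAt ℝ F y) (dG : ∀ y ∈ T, DifferentiableAt ℝ G y)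
    (hST : ∀ y ∈ S, ∀ z ∈ T, y ≤ z) (hu : u ∈ S) (hu' : u' ∈ S) (hv : v ∈ T) (hv' : v' ∈ T)
    (h : TangencySystem F G u v) (h' : TangencySystem F G u' v') : ¬ u < u' := by
  intro huu'
  obtain ⟨hslope, hintercept⟩ := h
  obtain ⟨hslope', hintercept'⟩ := h'
  have hF' : deriv F u < deriv F u' := hF.strictMonoOn_deriv dF hu hu' huu'
  have habove := tangent_lt_of_strictConvexOn hF hu hu' (dF u hu) huu'.ne
  have hbelow := tangent_le_of_strictConvexOn hG hv' hv (dG v' hv')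
  have hle : 0 ≤ (deriv F u' - deriv F u) * (v - u') :=
    mul_nonneg (sub_pos.2 hF').le (sub_nonneg.2 (hST u' hu' v hv))
  rw [← hslope] at hintercept
  rw [← hslope'] at hintercept' hbelow
  linarith

theorem TangencySystem.eq_of_eq_fst (hG : StrictConvexOn ℝ T G)
    (dG : ∀ y ∈ T, DifferentiableAt ℝ G y) (hv : v ∈ T) (hv' : v' ∈ T)
    (h : TangencySystem F G u v) (h' : TangencySystem F G u v') : v = v' :=
  (hG.strictMonoOn_deriv dG).injOn hv hv' (h.1.symm.trans h'.1)

theorem existsUnique_tangencySystem (hab : a < b) (hbd : b < d)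
    (hF : StrictConvexOn ℝ (Icc a b) F) (hG : StrictConvexOn ℝ (Ici b) G)
    (dF : ∀ y ∈ Icc a b, DifferentiableAt ℝ F y) (dG : ∀ y ∈ Ici b, DifferentiableAt ℝ G y)
    (hb : F b = G b) (ha' : deriv F a < deriv G b) (hb' : deriv G b < deriv F b)
    (hd' : deriv F b < deriv G d) :
    ∃! q : ℝ × ℝ, a < q.1 ∧ q.1 < b ∧ b < q.2 ∧ TangencySystem F G q.1 q.2 := by
  have hsub : Icc b d ⊆ Ici b := Icc_subset_Ici_self
  obtain ⟨y₁, hy₁, y₂, hy₂, h⟩ := exists_tangencySystem hab hbd hF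
    (hG.subset hsub (convex_Icc b d)) dF (fun y hy => dG y (hsub hy)) hb ha' hb' hd'
  refine ⟨(y₁, y₂), ⟨hy₁.1, hy₁.2, hy₂.1, h⟩, ?_⟩
  rintro ⟨z₁, z₂⟩ ⟨haz, hzb, hbz, hz⟩
  have hST : ∀ y ∈ Icc a b, ∀ z ∈ Ici b, y ≤ z := fun y hy z hz => hy.2.trans hz
  have hy₁F := Ioo_subset_Icc_self hy₁
  have hz₁F : z₁ ∈ Icc a b := ⟨haz.le, hzb.le⟩
  obtain rfl : z₁ = y₁ := le_antisymm
    (not_lt.1 (h.not_lt hF hG dF dG hST hy₁F hz₁F hy₂.1.le hbz.le hz))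
    (not_lt.1 (hz.not_lt hF hG dF dG hST hz₁F hy₁F hbz.le hy₂.1.le h))
  obtain rfl : z₂ = y₂ := hz.eq_of_eq_fst hG dG hbz.le hy₂.1.le h
  rfl

end CommonTangent

section ScaledProfile

variable {s a b d y : ℝ} {D I : Set ℝ} {H h F f G g : ℝ → ℝ}

/-- `H` is the function with profile `h` in the coordinate `x` given by `y = exp (2 * s * x)`, the
ratio of the two solutions `exp (± s * x)` of `u'' = s ^ 2 * u`. -/
def HasScaledProfile (s : ℝ) (H h : ℝ → ℝ) : Prop :=
  ∀ y, 0 < y → H y = √y * h (Real.log y / (2 * s))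

/-- The derivative, at the point `exp (2 * s * x)`, of a function with profile `h`. -/
noncomputable def scaledSlope (s : ℝ) (h : ℝ → ℝ) (x : ℝ) : ℝ :=
  Real.exp (-(s * x)) * (deriv h x + s * h x) / (2 * s)

theorem log_exp_two_mul_div (hs : 0 < s) (x : ℝ) :
    Real.log (Real.exp (2 * s * x)) / (2 * s) = x := by
  rw [Real.log_exp, mul_div_cancel_left₀ x (by positivity)]

theorem exp_neg_log_div (hs : 0 < s) (hy : 0 < y) :
    Real.exp (-(s * (Real.log y / (2 * s)))) = (√y)⁻¹ := by
  rw [Real.exp_neg, Real.sqrt_eq_rpow, Real.rpow_def_of_pos hy]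
  congr 2
  field_simp

theorem strictMonoOn_log_div (hs : 0 < s) :
    StrictMonoOn (fun y => Real.log y / (2 * s)) (Ioi 0) := fun _ hu _ _ huv =>
  div_lt_div_of_pos_right (Real.log_lt_log hu huv) (by positivity)

namespace HasScaledProfile

theorem hasDerivAt (hH : HasScaledProfile s H h) (hs : 0 < s) (hy : 0 < y)
    (hh : DifferentiableAt ℝ h (Real.log y / (2 * s))) :
    HasDerivAt H (scaledSlope s h (Real.log y / (2 * s))) y := by
  have hlog : HasDerivAt (fun y => Real.log y / (2 * s)) (y⁻¹ / (2 * s)) y :=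
    (Real.hasDerivAt_log hy.ne').div_const _
  have hprod := (Real.hasDerivAt_sqrt hy.ne').mul (hh.hasDerivAt.comp y hlog)
  have hloc : H =ᶠ[𝓝 y] fun y => √y * h (Real.log y / (2 * s)) :=
    (eventually_gt_nhds hy).mono hH
  refine (hprod.congr_of_eventuallyEq hloc).congr_deriv ?_
  have : 0 < √y := Real.sqrt_pos.2 hy
  have hyinv : y⁻¹ = (√y)⁻¹ * (√y)⁻¹ := by rw [← mul_inv, Real.mul_self_sqrt hy.le]
  rw [scaledSlope, exp_neg_log_div hs hy, hyinv]
  simp only [Function.comp_apply]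
  field_simp
  ring

theorem apply_exp (hH : HasScaledProfile s H h) (hs : 0 < s) (x : ℝ) :
    H (Real.exp (2 * s * x)) = √(Real.exp (2 * s * x)) * h x := by
  rw [hH _ (Real.exp_pos _), log_exp_two_mul_div hs]

theorem deriv_exp (hH : HasScaledProfile s H h) (hs : 0 < s) {x : ℝ}
    (hh : DifferentiableAt ℝ h x) : deriv H (Real.exp (2 * s * x)) = scaledSlope s h x := by
  have hx := log_exp_two_mul_div hs x
  rw [(hH.hasDerivAt hs (Real.exp_pos _) (by rwa [hx])).deriv, hx]

theorem strictConvexOn (hH : HasScaledProfile s H h) (hs : 0 < s) (hh : Differentiable ℝ h)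
    (hmono : StrictMonoOn (scaledSlope s h) I) (hD : Convex ℝ D) (hD₀ : D ⊆ Ioi 0)
    (hDI : MapsTo (fun y => Real.log y / (2 * s)) D I) : StrictConvexOn ℝ D H := by
  have hderiv : ∀ y ∈ D, HasDerivAt H (scaledSlope s h (Real.log y / (2 * s))) y :=
    fun y hy => hH.hasDerivAt hs (hD₀ hy) (hh _)
  have hderiv_mono : StrictMonoOn (deriv H) D :=
    (hmono.comp ((strictMonoOn_log_div hs).mono hD₀) hDI).congr
      fun y hy => (hderiv y hy).deriv.symm
  exact (hderiv_mono.mono interior_subset).strictConvexOn_of_deriv hD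
    fun y hy => (hderiv y hy).continuousAt.continuousWithinAt

end HasScaledProfile

theorem existsUnique_tangencySystem_of_hasScaledProfile (hs : 0 < s)
    (hF : HasScaledProfile s F f) (hG : HasScaledProfile s G g) (df : Differentiable ℝ f)
    (dg : Differentiable ℝ g) (hab : a < b) (hbd : b < d)
    (mf : StrictMonoOn (scaledSlope s f) (Icc a b)) (mg : StrictMonoOn (scaledSlope s g) (Ici b))
    (hb : f b = g b) (ha' : scaledSlope s f a < scaledSlope s g b) (hb' : deriv g b < deriv f b)
    (hd' : scaledSlope s f b < scaledSlope s g d) :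
    ∃! q : ℝ × ℝ, Real.exp (2 * s * a) < q.1 ∧ q.1 < Real.exp (2 * s * b) ∧
      Real.exp (2 * s * b) < q.2 ∧ TangencySystem F G q.1 q.2 := by
  have hexp : StrictMono fun x => Real.exp (2 * s * x) :=
    Real.exp_strictMono.comp (strictMono_mul_left_of_pos (by positivity))
  have hIcc : Icc (Real.exp (2 * s * a)) (Real.exp (2 * s * b)) ⊆ Ioi 0 :=
    fun y hy => (Real.exp_pos _).trans_le hy.1
  have hIci : Ici (Real.exp (2 * s * b)) ⊆ Ioi 0 := fun y hy => (Real.exp_pos _).trans_le hy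
  have hlog := (strictMonoOn_log_div hs).monotoneOn
  have hlog_Icc : MapsTo (fun y => Real.log y / (2 * s))
      (Icc (Real.exp (2 * s * a)) (Real.exp (2 * s * b))) (Icc a b) := fun y hy => by
    simpa only [mem_Icc, log_exp_two_mul_div hs] using And.intro
      (hlog (Real.exp_pos _) (hIcc hy) hy.1) (hlog (hIcc hy) (Real.exp_pos _) hy.2)
  have hlog_Ici : MapsTo (fun y => Real.log y / (2 * s))
      (Ici (Real.exp (2 * s * b))) (Ici b) := fun y hy => by
    simpa only [mem_Ici, log_exp_two_mul_div hs] using hlog (Real.exp_pos _) (hIci hy) hy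
  have hslope : scaledSlope s g b < scaledSlope s f b := by
    unfold scaledSlope
    rw [hb]
    gcongr
  refine existsUnique_tangencySystem (hexp hab) (hexp hbd)
    (hF.strictConvexOn hs df mf (convex_Icc _ _) hIcc hlog_Icc)
    (hG.strictConvexOn hs dg mg (convex_Ici _) hIci hlog_Ici)
    (fun y hy => (hF.hasDerivAt hs (hIcc hy) (df _)).differentiableAt)
    (fun y hy => (hG.hasDerivAt hs (hIci hy) (dg _)).differentiableAt)
    (by rw [hF.apply_exp hs, hG.apply_exp hs, hb]) ?_ ?_ ?_ <;>
  simpa only [hF.deriv_exp hs (df _), hG.deriv_exp hs (dg _)]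

-- The derivative of `exp (-s x) (h' + s h)` is `exp (-s x) (h'' - s² h)`.
theorem strictMonoOn_scaledSlope (hs : 0 < s) (hh : ContDiff ℝ 2 h) (hD : Convex ℝ D)
    (hpos : ∀ x ∈ interior D, 0 < deriv (deriv h) x - s ^ 2 * h x) :
    StrictMonoOn (scaledSlope s h) D := by
  have hh' : Differentiable ℝ (deriv h) :=
    (contDiff_succ_iff_deriv (n := 1).1 hh).2.2.differentiable one_ne_zero
  have hderiv (x : ℝ) : HasDerivAt (scaledSlope s h)
      (Real.exp (-(s * x)) * (deriv (deriv h) x - s ^ 2 * h x) / (2 * s)) x := by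
    have hexp : HasDerivAt (fun x => Real.exp (-(s * x))) (Real.exp (-(s * x)) * -(s * 1)) x :=
      ((hasDerivAt_id' x).const_mul s).neg.exp
    have hsum := (hh' x).hasDerivAt.add
      ((hh.differentiable two_ne_zero x).hasDerivAt.const_mul s)
    refine ((hexp.mul hsum).div_const (2 * s)).congr_deriv ?_
    simp only [Pi.add_apply]
    ring
  refine strictMonoOn_of_deriv_pos hD
    (fun x _ => (hderiv x).continuousAt.continuousWithinAt) fun x hx => ?_
  have := hpos x hx
  rw [(hderiv x).deriv]
  positivity

theorem ite_le_eq_right {x : ℝ} (h₀ : f a = g a) (hx : a ≤ x) :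
    (if x ≤ a then f x else g x) = g x := by
  split_ifs with hxa
  · rw [le_antisymm hxa hx, h₀]
  · rfl

theorem hasDerivAt_ite_le (df : Differentiable ℝ f) (dg : Differentiable ℝ g) (h₀ : f a = g a)
    (h₁ : deriv f a = deriv g a) (x : ℝ) :
    HasDerivAt (fun x => if x ≤ a then f x else g x)
      (if x ≤ a then deriv f x else deriv g x) x := by
  rcases lt_trichotomy x a with hlt | rfl | hgt
  · rw [if_pos hlt.le]
    exact (df x).hasDerivAt.congr_of_eventuallyEq
      ((eventually_lt_nhds hlt).mono fun z hz => if_pos hz.le)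
  · rw [if_pos le_rfl, ← hasDerivWithinAt_univ, ← Iic_union_Ici (a := x)]
    refine HasDerivWithinAt.union ?_ ?_
    · exact (df x).hasDerivAt.hasDerivWithinAt.congr (fun z hz => if_pos hz) (if_pos le_rfl)
    · rw [h₁]
      exact (dg x).hasDerivAt.hasDerivWithinAt.congr
        (fun z hz => ite_le_eq_right h₀ hz) (ite_le_eq_right h₀ le_rfl)
  · rw [if_neg hgt.not_ge]
    exact (dg x).hasDerivAt.congr_of_eventuallyEq
      ((eventually_gt_nhds hgt).mono fun z hz => if_neg (not_le.2 hz))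

theorem scaledSlope_ite_le (df : Differentiable ℝ f) (dg : Differentiable ℝ g) (h₀ : f a = g a)
    (h₁ : deriv f a = deriv g a) (x : ℝ) :
    scaledSlope s (fun x => if x ≤ a then f x else g x) x =
      if x ≤ a then scaledSlope s f x else scaledSlope s g x := by
  rw [scaledSlope, (hasDerivAt_ite_le df dg h₀ h₁ x).deriv]
  split_ifs <;> rfl

theorem strictMonoOn_scaledSlope_ite_le (df : Differentiable ℝ f) (dg : Differentiable ℝ g)
    (h₀ : f a = g a) (h₁ : deriv f a = deriv g a) (hba : b ≤ a)
    (mf : StrictMonoOn (scaledSlope s f) (Icc b a)) (mg : StrictMonoOn (scaledSlope s g) (Ici a)) :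
    StrictMonoOn (scaledSlope s fun x => if x ≤ a then f x else g x) (Ici b) := by
  have hslope : scaledSlope s f a = scaledSlope s g a := by rw [scaledSlope, scaledSlope, h₀, h₁]
  have hleft : EqOn (scaledSlope s f) (scaledSlope s fun x => if x ≤ a then f x else g x)
      (Icc b a) := fun x hx => by rw [scaledSlope_ite_le df dg h₀ h₁, if_pos hx.2]
  have hright : EqOn (scaledSlope s g) (scaledSlope s fun x => if x ≤ a then f x else g x)
      (Ici a) := fun x hx => by
    rw [scaledSlope_ite_le df dg h₀ h₁, ite_le_eq_right hslope hx]
  rw [← Icc_union_Ici_eq_Ici hba]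
  exact (mf.congr hleft).union (mg.congr hright) (isGreatest_Icc hba) isLeast_Ici

end ScaledProfile

section Profiles

variable {α δ l c u v x : ℝ} {F G : ℝ → ℝ}

/-- The profile `h_{r1}(·; c)`; for `c = 0` it is also the profile of `H_l`. -/
noncomputable def innerProfile (α δ l c x : ℝ) : ℝ :=
  δ * c * (c - 2 * x) + (δ - l / α) * x ^ 2 + c - l / α ^ 2

/-- The distance `f₀` from `c` to the point where `h_{r1}(·; c)` and `h_{r2}(·; c)` meet. -/
noncomputable def fitOffset (α δ l : ℝ) : ℝ :=
  1 / √(2 * α) * (√((α * δ + l) / (α * δ - l)) - 1)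

/-- The coefficient `B₀`, for which `h_{r1}(·; c)` and `h_{r2}(·; c)` fit together smoothly. -/
noncomputable def fitCoeff (α δ l : ℝ) : ℝ :=
  -(2 * fitOffset α δ l / (α * √(2 * α))) * (α * δ - l) *
    Real.exp (fitOffset α δ l * √(2 * α))

/-- The profile `h_{r2}(·; c)`. -/
noncomputable def outerProfile (α δ l c x : ℝ) : ℝ :=
  l / α * c * (c - 2 * x) + c + fitCoeff α δ l * Real.exp (-(x - c) * √(2 * α))

/-- The profile `h_r(·; c)` of `H_r(·; c)`. -/
noncomputable def gluedProfile (α δ l c x : ℝ) : ℝ :=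
  if x ≤ fitOffset α δ l + c then innerProfile α δ l c x else outerProfile α δ l c x

/-- The polynomial defining `x_v(c)`: half of `h'' - 2αh` for `h = h_{r1}(·; c)`. Its sign decides
on which side `H_r(·; c)` is convex. -/
def curvature (α δ l c x : ℝ) : ℝ :=
  δ - (α * δ - l) * x ^ 2 + c * α * (δ * (2 * x - c) - 1)

/-- The point `x_c` at which the profiles of `H_l` and `H_r(·; c)` coincide. -/
noncomputable def crossingPoint (δ c : ℝ) : ℝ := 1 / (2 * δ) + c / 2

theorem contDiff_innerProfile {n : ℕ∞} : ContDiff ℝ n (innerProfile α δ l c) := by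
  unfold innerProfile
  fun_prop

theorem contDiff_outerProfile {n : ℕ∞} : ContDiff ℝ n (outerProfile α δ l c) := by
  unfold outerProfile
  fun_prop

theorem differentiable_innerProfile : Differentiable ℝ (innerProfile α δ l c) :=
  (contDiff_innerProfile (n := 1)).differentiable one_ne_zero

theorem differentiable_outerProfile : Differentiable ℝ (outerProfile α δ l c) :=
  (contDiff_outerProfile (n := 1)).differentiable one_ne_zero

theorem deriv_innerProfile :
    deriv (innerProfile α δ l c) = fun x => 2 * (δ - l / α) * x - 2 * δ * c := by
  funext x
  have hx := hasDerivAt_id' x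
  have hlin := ((hx.const_mul 2).const_sub c).const_mul (δ * c)
  have hsq := (hx.fun_pow 2).const_mul (δ - l / α)
  refine (((hlin.fun_add hsq).add_const c).sub_const (l / α ^ 2)).deriv.trans ?_
  push_cast
  ring

theorem deriv_deriv_innerProfile : deriv (deriv (innerProfile α δ l c)) x = 2 * (δ - l / α) := by
  rw [deriv_innerProfile]
  simpa only [mul_one] using
    (((hasDerivAt_id' x).const_mul (2 * (δ - l / α))).sub_const (2 * δ * c)).deriv

theorem hasDerivAt_exp_decay (s c x : ℝ) : HasDerivAt (fun x => Real.exp (-(x - c) * s))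
    (-s * Real.exp (-(x - c) * s)) x :=
  (((hasDerivAt_id' x).sub_const c).fun_neg.mul_const s).exp.congr_deriv (by ring)

theorem deriv_outerProfile : deriv (outerProfile α δ l c) = fun x =>
    -2 * (l / α) * c - √(2 * α) * (fitCoeff α δ l * Real.exp (-(x - c) * √(2 * α))) := by
  funext x
  have hlin := (((hasDerivAt_id' x).const_mul 2).const_sub c).const_mul (l / α * c)
  have hexp := (hasDerivAt_exp_decay (√(2 * α)) c x).const_mul (fitCoeff α δ l)
  refine ((hlin.add_const c).fun_add hexp).deriv.trans ?_
  ring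

theorem deriv_deriv_outerProfile : deriv (deriv (outerProfile α δ l c)) x =
    √(2 * α) ^ 2 * (fitCoeff α δ l * Real.exp (-(x - c) * √(2 * α))) := by
  rw [deriv_outerProfile]
  have hexp := ((hasDerivAt_exp_decay (√(2 * α)) c x).const_mul (fitCoeff α δ l)).const_mul
    (√(2 * α))
  refine (hexp.const_sub (-2 * (l / α) * c)).deriv.trans ?_
  ring

theorem deriv_deriv_innerProfile_sub (hα : 0 < α) :
    deriv (deriv (innerProfile α δ l c)) x - √(2 * α) ^ 2 * innerProfile α δ l c x =
      2 * curvature α δ l c x := by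
  rw [deriv_deriv_innerProfile, Real.sq_sqrt (by positivity), innerProfile, curvature]
  field_simp
  ring

theorem deriv_deriv_outerProfile_sub (hα : 0 < α) :
    deriv (deriv (outerProfile α δ l c)) x - √(2 * α) ^ 2 * outerProfile α δ l c x =
      2 * c * (l * (2 * x - c) - α) := by
  rw [deriv_deriv_outerProfile, Real.sq_sqrt (by positivity), outerProfile]
  field_simp
  ring

theorem concaveOn_curvature (hl : l < α * δ) : ConcaveOn ℝ univ (curvature α δ l c) := by
  refine ⟨convex_univ, fun x _ y _ a b ha hb hab => ?_⟩
  obtain rfl : b = 1 - a := by linarith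
  have hgap : 0 ≤ (α * δ - l) * (a * (1 - a)) * (x - y) ^ 2 :=
    mul_nonneg (mul_nonneg (sub_pos.2 hl).le (mul_nonneg ha hb)) (sq_nonneg _)
  simp only [smul_eq_mul, curvature]
  linarith

theorem curvature_pos_of_mem_Icc (hl : l < α * δ) (hu : 0 < curvature α δ l c u)
    (hv : 0 < curvature α δ l c v) (hx : x ∈ Icc u v) : 0 < curvature α δ l c x :=
  (lt_min hu hv).trans_le
    ((concaveOn_curvature hl).min_le_of_mem_Icc (mem_univ u) (mem_univ v) hx)

theorem lt_of_curvature_eq_zero (hl : l < α * δ) (hu : 0 < curvature α δ l c u)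
    (hv : 0 < curvature α δ l c v) (hx : curvature α δ l c x = 0) (hxv : x < v) : x < u :=
  lt_of_not_ge fun hux => (curvature_pos_of_mem_Icc hl hu hv ⟨hux, hxv.le⟩).ne' hx

theorem strictMonoOn_scaledSlope_innerProfile (hα : 0 < α) (hl : l < α * δ)
    (hu : 0 < curvature α δ l c u) (hv : 0 < curvature α δ l c v) :
    StrictMonoOn (scaledSlope √(2 * α) (innerProfile α δ l c)) (Icc u v) := by
  refine strictMonoOn_scaledSlope (Real.sqrt_pos.2 (by positivity)) contDiff_innerProfile
    (convex_Icc u v) fun x hx => ?_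
  rw [deriv_deriv_innerProfile_sub hα]
  exact mul_pos two_pos (curvature_pos_of_mem_Icc hl hu hv (interior_subset hx))

theorem strictMonoOn_scaledSlope_outerProfile (hα : 0 < α) (hl : 0 < l) (hc : 0 < c)
    (hu : α ≤ l * (2 * u - c)) :
    StrictMonoOn (scaledSlope √(2 * α) (outerProfile α δ l c)) (Ici u) := by
  refine strictMonoOn_scaledSlope (Real.sqrt_pos.2 (by positivity)) contDiff_outerProfile
    (convex_Ici u) fun x hx => ?_
  rw [interior_Ici, mem_Ioi] at hx
  rw [deriv_deriv_outerProfile_sub hα]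
  have : l * (2 * u - c) < l * (2 * x - c) := by gcongr
  exact mul_pos (by positivity) (by linarith)

theorem fitOffset_quadratic (hα : 0 < α) (hl₀ : 0 < l) (hl : l < α * δ) :
    (α * δ - l) * (α * fitOffset α δ l ^ 2 + √(2 * α) * fitOffset α δ l) = l := by
  have hs : √(2 * α) ^ 2 = 2 * α := Real.sq_sqrt (by positivity)
  have hgap : 0 < α * δ - l := sub_pos.2 hl
  have hsum : √(2 * α) * fitOffset α δ l + 1 = √((α * δ + l) / (α * δ - l)) := by
    rw [fitOffset]
    field_simp
    ring
  have hsq : (α * δ - l) * (√(2 * α) * fitOffset α δ l + 1) ^ 2 = α * δ + l := by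
    rw [hsum, Real.sq_sqrt (div_nonneg (by linarith) hgap.le)]
    field_simp
  linear_combination hsq / 2 - (α * δ - l) * fitOffset α δ l ^ 2 / 2 * hs

theorem fitCoeff_mul_exp : fitCoeff α δ l * Real.exp (-(fitOffset α δ l + c - c) * √(2 * α)) =
    -(2 * fitOffset α δ l / (α * √(2 * α))) * (α * δ - l) := by
  have hexponent :
      fitOffset α δ l * √(2 * α) + -(fitOffset α δ l + c - c) * √(2 * α) = 0 := by ring
  rw [fitCoeff, mul_assoc, ← Real.exp_add, hexponent, Real.exp_zero, mul_one]

theorem innerProfile_eq_outerProfile (hα : 0 < α) (hl₀ : 0 < l) (hl : l < α * δ) :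
    innerProfile α δ l c (fitOffset α δ l + c) = outerProfile α δ l c (fitOffset α δ l + c) := by
  have : 0 < √(2 * α) := Real.sqrt_pos.2 (by positivity)
  have hs : √(2 * α) ^ 2 = 2 * α := Real.sq_sqrt (by positivity)
  have hfit := fitOffset_quadratic hα hl₀ hl
  rw [innerProfile, outerProfile, fitCoeff_mul_exp]
  field_simp
  linear_combination √(2 * α) * hfit - (α * δ - l) * fitOffset α δ l * hs

theorem deriv_innerProfile_eq_deriv_outerProfile (hα : 0 < α) :
    deriv (innerProfile α δ l c) (fitOffset α δ l + c) =
      deriv (outerProfile α δ l c) (fitOffset α δ l + c) := by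
  have : 0 < √(2 * α) := Real.sqrt_pos.2 (by positivity)
  simp only [deriv_innerProfile, deriv_outerProfile, fitCoeff_mul_exp]
  field_simp
  ring

theorem hasDerivAt_gluedProfile (hα : 0 < α) (hl₀ : 0 < l) (hl : l < α * δ) (x : ℝ) :
    HasDerivAt (gluedProfile α δ l c) (if x ≤ fitOffset α δ l + c then
      deriv (innerProfile α δ l c) x else deriv (outerProfile α δ l c) x) x :=
  hasDerivAt_ite_le differentiable_innerProfile differentiable_outerProfile
    (innerProfile_eq_outerProfile hα hl₀ hl) (deriv_innerProfile_eq_deriv_outerProfile hα) x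

theorem scaledSlope_gluedProfile_of_le {s : ℝ} (hα : 0 < α) (hl₀ : 0 < l) (hl : l < α * δ)
    (hx : x ≤ fitOffset α δ l + c) :
    scaledSlope s (gluedProfile α δ l c) x = scaledSlope s (innerProfile α δ l c) x :=
  (scaledSlope_ite_le differentiable_innerProfile differentiable_outerProfile
    (innerProfile_eq_outerProfile hα hl₀ hl) (deriv_innerProfile_eq_deriv_outerProfile hα) x).trans
    (if_pos hx)

theorem strictMonoOn_scaledSlope_gluedProfile (hα : 0 < α) (hl₀ : 0 < l) (hl : l < α * δ)
    (hc : 0 < c) (hfit : α / (2 * l) < fitOffset α δ l) (hu : u ≤ fitOffset α δ l + c)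
    (hcurv : 0 < curvature α δ l c u) (hcurv' : 0 < curvature α δ l c (fitOffset α δ l + c)) :
    StrictMonoOn (scaledSlope √(2 * α) (gluedProfile α δ l c)) (Ici u) := by
  rw [div_lt_iff₀ (by positivity)] at hfit
  have hlc : 0 < l * c := mul_pos hl₀ hc
  exact strictMonoOn_scaledSlope_ite_le differentiable_innerProfile differentiable_outerProfile
    (innerProfile_eq_outerProfile hα hl₀ hl) (deriv_innerProfile_eq_deriv_outerProfile hα) hu
    (strictMonoOn_scaledSlope_innerProfile hα hl hcurv hcurv')
    (strictMonoOn_scaledSlope_outerProfile hα hl₀ hc (by linarith))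

theorem innerProfile_crossingPoint (hδ : δ ≠ 0) :
    innerProfile α δ l c (crossingPoint δ c) = innerProfile α δ l 0 (crossingPoint δ c) := by
  have hcross : δ * c * (c - 2 * crossingPoint δ c) = -c := by
    rw [crossingPoint]
    field_simp
    ring
  rw [innerProfile, innerProfile, hcross]
  ring

/-- The open conditions on `c > 0`, all satisfied at `c = 0`, under which `H_l` and `H_r(·; c)` have
the convexity and the ordered gradients that a common tangent requires. -/
structure IsSmallShift (α δ l c : ℝ) : Prop where
  pos : 0 < c
  curvature_zero_pos : 0 < curvature α δ l c 0
  curvature_fit_pos : 0 < curvature α δ l c (fitOffset α δ l + c)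
  crossingPoint_lt : crossingPoint δ c < fitOffset α δ l
  slope_zero_lt : scaledSlope √(2 * α) (innerProfile α δ l 0) 0 <
    scaledSlope √(2 * α) (innerProfile α δ l c) (crossingPoint δ c)
  slope_crossingPoint_lt : scaledSlope √(2 * α) (innerProfile α δ l 0) (crossingPoint δ c) <
    scaledSlope √(2 * α) (innerProfile α δ l c) (fitOffset α δ l)

theorem continuous_scaledSlope_innerProfile {s : ℝ} {k ξ : ℝ → ℝ} (hk : Continuous k)
    (hξ : Continuous ξ) : Continuous fun c => scaledSlope s (innerProfile α δ l (k c)) (ξ c) := by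
  simp only [scaledSlope, deriv_innerProfile, innerProfile]
  fun_prop

theorem curvature_zero_fitOffset_pos (hα : 0 < α) (hl₀ : 0 < l) (hl : l < α * δ)
    (hfit : 0 < fitOffset α δ l) : 0 < curvature α δ l 0 (fitOffset α δ l) := by
  have hlin : 0 < (α * δ - l) * (√(2 * α) * fitOffset α δ l) :=
    mul_pos (sub_pos.2 hl) (mul_pos (Real.sqrt_pos.2 (by positivity)) hfit)
  refine (mul_pos_iff_of_pos_left hα).1 ?_
  rw [curvature]
  linarith [fitOffset_quadratic hα hl₀ hl]

theorem eventually_isSmallShift (hα : 0 < α) (hδ : 0 < δ) (hl₀ : 0 < l) (hl : l < α * δ)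
    (hfit : α / (2 * l) < fitOffset α δ l) : ∀ᶠ c in 𝓝[>] 0, IsSmallShift α δ l c := by
  have hcross₀ : 0 < 1 / (2 * δ) := by positivity
  have hcross : 1 / (2 * δ) < fitOffset α δ l := by
    refine lt_trans ?_ hfit
    rw [div_lt_div_iff₀ (by positivity) (by positivity)]
    linarith
  have hfit₀ : 0 ≤ fitOffset α δ l := (hcross₀.trans hcross).le
  have hcurv₀ : 0 < curvature α δ l 0 0 := by simpa [curvature] using hδ
  have hcurv := curvature_zero_fitOffset_pos hα hl₀ hl (hcross₀.trans hcross)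
  have hmono := strictMonoOn_scaledSlope_innerProfile hα hl hcurv₀ hcurv
  have hξ : Continuous (crossingPoint δ) := by
    unfold crossingPoint
    fun_prop
  have hξ₀ : crossingPoint δ 0 = 1 / (2 * δ) := by simp [crossingPoint]
  have near {f g : ℝ → ℝ} (hf : Continuous f) (hg : Continuous g) (h : f 0 < g 0) :
      ∀ᶠ c in 𝓝[>] 0, f c < g c :=
    (hf.continuousAt.eventually_lt hg.continuousAt h).filter_mono nhdsWithin_le_nhds
  have ev₁ := near (f := fun _ => 0) (g := fun c => curvature α δ l c 0) (by fun_prop)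
    (by unfold curvature; fun_prop) hcurv₀
  have ev₂ := near (f := fun _ => 0) (g := fun c => curvature α δ l c (fitOffset α δ l + c))
    (by fun_prop) (by unfold curvature; fun_prop) (by simpa only [add_zero] using hcurv)
  have ev₃ := near hξ (g := fun _ => fitOffset α δ l) continuous_const (by rwa [hξ₀])
  have ev₄ := near (f := fun _ => scaledSlope √(2 * α) (innerProfile α δ l 0) 0) continuous_const
    (continuous_scaledSlope_innerProfile continuous_id' hξ)
    (by simpa only [hξ₀] using hmono ⟨le_rfl, hfit₀⟩ ⟨hcross₀.le, hcross.le⟩ hcross₀)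
  have ev₅ := near (continuous_scaledSlope_innerProfile (k := fun _ => 0) continuous_const hξ)
    (continuous_scaledSlope_innerProfile continuous_id' continuous_const)
    (by simpa only [hξ₀] using hmono ⟨hcross₀.le, hcross.le⟩ ⟨hfit₀, le_rfl⟩ hcross)
  filter_upwards [self_mem_nhdsWithin, ev₁, ev₂, ev₃, ev₄, ev₅] with c h₀ h₁ h₂ h₃ h₄ h₅
  exact ⟨h₀, h₁, h₂, h₃, h₄, h₅⟩

theorem IsSmallShift.existsUnique_tangencySystem (hc : IsSmallShift α δ l c) (hα : 0 < α)
    (hδ : 0 < δ) (hl₀ : 0 < l) (hl : l < α * δ) (hfit : α / (2 * l) < fitOffset α δ l)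
    (hF : HasScaledProfile √(2 * α) F (innerProfile α δ l 0))
    (hG : HasScaledProfile √(2 * α) G (gluedProfile α δ l c)) :
    ∃! q : ℝ × ℝ, 1 < q.1 ∧ q.1 < Real.exp (2 * √(2 * α) * crossingPoint δ c) ∧
      Real.exp (2 * √(2 * α) * crossingPoint δ c) < q.2 ∧ TangencySystem F G q.1 q.2 := by
  have hc₀ := hc.pos
  have hcross₀ : 0 < crossingPoint δ c := add_pos (by positivity) (by positivity)
  have hcross := hc.crossingPoint_lt
  have hmono₀ : StrictMonoOn (scaledSlope √(2 * α) (innerProfile α δ l 0))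
      (Icc 0 (crossingPoint δ c)) :=
    (strictMonoOn_scaledSlope_innerProfile hα hl (by simpa [curvature] using hδ)
      (curvature_zero_fitOffset_pos hα hl₀ hl (hcross₀.trans hcross))).mono
      (Icc_subset_Icc_right hcross.le)
  have hmono : StrictMonoOn (scaledSlope √(2 * α) (gluedProfile α δ l c))
      (Ici (crossingPoint δ c)) :=
    (strictMonoOn_scaledSlope_gluedProfile hα hl₀ hl hc₀ hfit (by linarith)
      hc.curvature_zero_pos hc.curvature_fit_pos).mono (Ici_subset_Ici.2 hcross₀.le)
  have hcross_le : crossingPoint δ c ≤ fitOffset α δ l + c := by linarith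
  have hvalue : innerProfile α δ l 0 (crossingPoint δ c) =
      gluedProfile α δ l c (crossingPoint δ c) := by
    rw [gluedProfile, if_pos hcross_le, innerProfile_crossingPoint hδ.ne']
  have hderiv : deriv (gluedProfile α δ l c) (crossingPoint δ c) <
      deriv (innerProfile α δ l 0) (crossingPoint δ c) := by
    rw [(hasDerivAt_gluedProfile hα hl₀ hl _).deriv, if_pos hcross_le]
    simp only [deriv_innerProfile]
    linarith [mul_pos hδ hc₀]
  have hslope_left := hc.slope_zero_lt
  have hslope_right := hc.slope_crossingPoint_lt
  rw [← scaledSlope_gluedProfile_of_le hα hl₀ hl hcross_le] at hslope_left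
  rw [← scaledSlope_gluedProfile_of_le hα hl₀ hl (le_add_of_nonneg_right hc₀.le)] at hslope_right
  simpa only [mul_zero, Real.exp_zero] using existsUnique_tangencySystem_of_hasScaledProfile
    (Real.sqrt_pos.2 (by positivity)) hF hG differentiable_innerProfile
    (fun x => (hasDerivAt_gluedProfile hα hl₀ hl x).differentiableAt) hcross₀ hcross hmono₀ hmono
    hvalue hslope_left hderiv hslope_right

theorem hasScaledProfile_innerProfile_zero (hα : 0 < α)
    (hF : ∀ y, 0 < y → F y = √y * (-(l / α ^ 2) + (δ - l / α) / (8 * α) * Real.log y ^ 2)) :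
    HasScaledProfile √(2 * α) F (innerProfile α δ l 0) := by
  intro y hy
  have hs : √(2 * α) ^ 2 = 2 * α := Real.sq_sqrt (by positivity)
  rw [hF y hy, innerProfile, div_pow, mul_pow, hs]
  ring

end Profiles

/-- existence and uniqueness of the tangency pair for small c, together with
the bound y₁ < Ψ(f₀). -/
theorem stmt_8 (α δ lam : ℝ) (hα : 0 < α) (hδ : 0 < δ) (hlam : 0 < lam)
    (hltd : lam < α * δ)
    (f₀ : ℝ)
    (hf₀ : f₀ = (1 / Real.sqrt (2 * α)) * (Real.sqrt ((α * δ + lam) / (α * δ - lam)) - 1))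
    (hf₀big : α / (2 * lam) < f₀)
    (Ψ : ℝ → ℝ) (hΨ : ∀ x, Ψ x = Real.exp (2 * Real.sqrt (2 * α) * x))
    (Hl : ℝ → ℝ)
    (hHl : ∀ y, 0 < y → Hl y = Real.sqrt y *
      (-(lam / α ^ 2) + ((δ - lam / α) / (8 * α)) * (Real.log y) ^ 2))
    (B₀ : ℝ)
    (hB₀ : B₀ = -(2 * f₀ / (α * Real.sqrt (2 * α))) * (α * δ - lam) *
      Real.exp (f₀ * Real.sqrt (2 * α)))
    (hr1 hr2 hr Hr : ℝ → ℝ → ℝ)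
    (hhr1 : ∀ c x, hr1 c x = δ * c * (c - 2 * x) + (δ - lam / α) * x ^ 2 + c - lam / α ^ 2)
    (hhr2 : ∀ c x, hr2 c x = (lam / α) * c * (c - 2 * x) + c +
      B₀ * Real.exp (-(x - c) * Real.sqrt (2 * α)))
    (hhra : ∀ c x, x ≤ f₀ + c → hr c x = hr1 c x)
    (hhrb : ∀ c x, f₀ + c ≤ x → hr c x = hr2 c x)
    (hHr : ∀ c y, 0 < y → Hr c y = Real.sqrt y * hr c (Real.log y / (2 * Real.sqrt (2 * α))))
    -- x_v(c): the unique root, in (−∞, f₀+c), of x ↦ δ−(αδ−λ)x²+cα(δ(2x−c)−1)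
    (xv : ℝ → ℝ)
    (hxv : ∀ c, 0 < c →
      (xv c < f₀ + c ∧
        δ - (α * δ - lam) * (xv c) ^ 2 + c * α * (δ * (2 * xv c - c) - 1) = 0 ∧
        ∀ x, x < f₀ + c →
          δ - (α * δ - lam) * x ^ 2 + c * α * (δ * (2 * x - c) - 1) = 0 → x = xv c)) :
    ∃ c₁ > 0, ∀ c, 0 < c → c < c₁ →
      (∃! p : ℝ × ℝ,
        1 < p.1 ∧ p.1 < Ψ (1 / (2 * δ) + c / 2) ∧
        Ψ (1 / (2 * δ) + c / 2) ≤ max (Ψ (1 / (2 * δ) + c / 2)) (Ψ (xv c)) ∧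
        max (Ψ (1 / (2 * δ) + c / 2)) (Ψ (xv c)) < p.2 ∧
        TangencySystem Hl (Hr c) p.1 p.2) ∧
      (∀ p : ℝ × ℝ,
        (1 < p.1 ∧ p.1 < Ψ (1 / (2 * δ) + c / 2) ∧
        Ψ (1 / (2 * δ) + c / 2) ≤ max (Ψ (1 / (2 * δ) + c / 2)) (Ψ (xv c)) ∧
        max (Ψ (1 / (2 * δ) + c / 2)) (Ψ (xv c)) < p.2 ∧
        TangencySystem Hl (Hr c) p.1 p.2) → p.1 < Ψ f₀) := by
  obtain rfl : f₀ = fitOffset α δ lam := hf₀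
  obtain rfl : B₀ = fitCoeff α δ lam := hB₀
  obtain rfl : Ψ = fun x => Real.exp (2 * Real.sqrt (2 * α) * x) := funext hΨ
  have hΨ_mono : StrictMono fun x => Real.exp (2 * √(2 * α) * x) :=
    Real.exp_strictMono.comp (strictMono_mul_left_of_pos (by positivity))
  have hglued (c x : ℝ) : hr c x = gluedProfile α δ lam c x := by
    rw [gluedProfile]
    split_ifs with hx
    · rw [hhra c x hx, hhr1, innerProfile]
    · rw [hhrb c x (not_le.1 hx).le, hhr2, outerProfile]
  obtain ⟨c₁, hc₁, hsmall⟩ := (mem_nhdsGT_iff_exists_Ioo_subset).1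
    (eventually_isSmallShift hα hδ hlam hltd hf₀big)
  refine ⟨c₁, hc₁, fun c hc hcc₁ => ?_⟩
  have hshift : IsSmallShift α δ lam c := hsmall ⟨hc, hcc₁⟩
  obtain ⟨hxv_lt, hxv_root, -⟩ := hxv c hc
  have hxv_neg : xv c < 0 := lt_of_curvature_eq_zero hltd hshift.curvature_zero_pos
    hshift.curvature_fit_pos hxv_root hxv_lt
  have hxv_le : xv c ≤ 1 / (2 * δ) + c / 2 := hxv_neg.le.trans (by positivity)
  rw [max_eq_left (hΨ_mono.monotone hxv_le)]
  refine ⟨?_, fun p hp => hp.2.1.trans (hΨ_mono hshift.crossingPoint_lt)⟩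
  simpa only [le_refl, true_and, crossingPoint] using
    hshift.existsUnique_tangencySystem hα hδ hlam hltd hf₀big
      (hasScaledProfile_innerProfile_zero hα hHl) fun y hy => by rw [hHr c y hy, hglued]
end

section
/- For every ε>0 there exists c̄>0 such that for all c ∈ (0,c̄), every pair (y₁,y₂) with 1 < y₁ < y_c ≤ y_v(c) < y₂ solving the tangency system satisfies |y₁ − Ψ(1/(2δ))| < ε and |y₂ − Ψ(1/(2δ))| < ε; that is, both components of the tangency pair converge to Ψ(1/(2δ)) as c → 0. -/
/-!
Writing `y = exp (2 s x)` with `s = √(2α)`, the function `√y * h (log y / (2 s))` has slope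
`exp (-s x) * (s * h x + h' x) / (2 s)`, and `exp (-s x) * (s * h x + h' x)` has `x`-derivative
`exp (-s x) * (h'' x - s ^ 2 * h x)`. For the left profile this is bounded below by a positive
constant on `[0, r]` whenever the profile is nonpositive at `r`, so there the left slope expands
distances; such an `r` exists beyond `f₀`, because the left slope vanishes at `f₀`.

Up to `f₀ + c` the right profile is the left one plus `c * (1 + δ * (c - 2 * x))`; beyond it, it is
a multiple of `exp (-s x)`, which contributes no slope, plus `c * (1 + (λ / α) * (c - 2 * x))`. The
extra terms have slope at least `-4 δ c`. Equality of the slopes at `x₁ ≤ x₂` therefore forces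
`min x₂ f₀ - x₁ = O(c)`, and if `x₁` stays below and away from `f₀` this means
`x₂ - x₁ = O(c)`. A point `x₀` with `x₁ ≤ x₀ + c / 2 ≤ x₂` is then the limit of both.
-/

open Set Filter Topology

section Lift

/-- The function `y ↦ √y * h (log y / (2 s))` attached to a profile `h`; with `s = √(2α)` it turns
`h_l` and `h_r` into `H_l` and `H_r`. -/
noncomputable def logLift (s : ℝ) (h : ℝ → ℝ) (y : ℝ) : ℝ :=
  √y * h (Real.log y / (2 * s))

/-- The slope of `logLift s h` at the point `exp (2 s x)`, multiplied by `2 s`; it expresses the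
slope condition of the tangency system in the variable `x`. -/
noncomputable def liftSlope (s : ℝ) (h : ℝ → ℝ) (x : ℝ) : ℝ :=
  Real.exp (-(s * x)) * (s * h x + deriv h x)

variable {s x : ℝ} {h : ℝ → ℝ}

lemma sqrt_exp_two_mul_mul (s x : ℝ) : √(Real.exp (2 * s * x)) = Real.exp (s * x) := by
  rw [← Real.exp_half]
  ring_nf

lemma log_exp_two_mul_mul_div (hs : s ≠ 0) (x : ℝ) :
    Real.log (Real.exp (2 * s * x)) / (2 * s) = x := by
  rw [Real.log_exp]
  field_simp

lemma deriv_logLift_exp (hs : s ≠ 0) (hh : DifferentiableAt ℝ h x) :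
    deriv (logLift s h) (Real.exp (2 * s * x)) = liftSlope s h x / (2 * s) := by
  have hy : Real.exp (2 * s * x) ≠ 0 := (Real.exp_pos _).ne'
  have hcomp : HasDerivAt (fun y => h (Real.log y / (2 * s)))
      (deriv h x * ((Real.exp (2 * s * x))⁻¹ / (2 * s))) (Real.exp (2 * s * x)) := by
    refine HasDerivAt.comp (Real.exp (2 * s * x)) ?_ ((Real.hasDerivAt_log hy).div_const (2 * s))
    rw [log_exp_two_mul_mul_div hs]
    exact hh.hasDerivAt
  have hexp : Real.exp (2 * s * x) = Real.exp (s * x) ^ 2 := by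
    rw [← Real.exp_nat_mul]
    ring_nf
  refine ((Real.hasDerivAt_sqrt hy).mul hcomp).deriv.trans ?_
  rw [log_exp_two_mul_mul_div hs, sqrt_exp_two_mul_mul, hexp, liftSlope, Real.exp_neg]
  field_simp

lemma liftSlope_of_hasDerivAt {h' : ℝ} (hh : HasDerivAt h h' x) :
    liftSlope s h x = Real.exp (-(s * x)) * (s * h x + h') := by
  rw [liftSlope, hh.deriv]

lemma hasDerivAt_exp_neg_mul (s x : ℝ) :
    HasDerivAt (fun x => Real.exp (-(s * x))) (-(s * Real.exp (-(s * x)))) x :=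
  ((hasDerivAt_id x).const_mul s).neg.exp.congr_deriv (by simp only [id, Pi.neg_apply]; ring)

lemma hasDerivAt_liftSlope (hh : DifferentiableAt ℝ h x) (hh' : DifferentiableAt ℝ (deriv h) x) :
    HasDerivAt (liftSlope s h) (Real.exp (-(s * x)) * (deriv (deriv h) x - s ^ 2 * h x)) x :=
  ((hasDerivAt_exp_neg_mul s x).mul ((hh.hasDerivAt.const_mul s).add hh'.hasDerivAt)).congr_deriv
    (by simp only [Pi.add_apply]; ring)

lemma mul_sub_le_liftSlope_sub {a b m z : ℝ} (hs : 0 ≤ s) (hm : 0 ≤ m) (hh : Differentiable ℝ h)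
    (hh' : Differentiable ℝ (deriv h)) (hnonpos : ∀ u ∈ Icc a b, h u ≤ 0)
    (hconvex : ∀ u ∈ Icc a b, m ≤ deriv (deriv h) u) (hax : a ≤ x) (hxz : x ≤ z) (hzb : z ≤ b) :
    m * Real.exp (-(s * b)) * (z - x) ≤ liftSlope s h z - liftSlope s h x := by
  have hd (u : ℝ) := hasDerivAt_liftSlope (s := s) (hh u) (hh' u)
  refine (convex_Icc a b).mul_sub_le_image_sub_of_le_deriv
    (fun u _ => (hd u).continuousAt.continuousWithinAt)
    (fun u _ => (hd u).differentiableAt.differentiableWithinAt) (fun u hu => ?_)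
    x ⟨hax, hxz.trans hzb⟩ z ⟨hax.trans hxz, hzb⟩ hxz
  replace hu := interior_subset hu
  have hsq : s ^ 2 * h u ≤ 0 := mul_nonpos_of_nonneg_of_nonpos (sq_nonneg s) (hnonpos u hu)
  have hcurv : m ≤ deriv (deriv h) u - s ^ 2 * h u := by linarith [hconvex u hu]
  have hexp : Real.exp (-(s * b)) ≤ Real.exp (-(s * u)) := by
    have := hu.2
    gcongr
  rw [(hd u).deriv, mul_comm m]
  gcongr

end Lift

lemma hasDerivAt_of_eqOn_Iic_Ici {f g h : ℝ → ℝ} {a x f' : ℝ} (hfg : EqOn f g (Iic a))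
    (hfh : EqOn f h (Ici a)) (hg : x ≤ a → HasDerivAt g f' x) (hh : a ≤ x → HasDerivAt h f' x) :
    HasDerivAt f f' x := by
  rcases lt_trichotomy x a with hx | rfl | hx
  · exact (hg hx.le).congr_of_eventuallyEq (hfg.eventuallyEq_of_mem (Iic_mem_nhds hx))
  · have hleft := (hg le_rfl).hasDerivWithinAt.congr hfg (hfg self_mem_Iic)
    have hright := (hh le_rfl).hasDerivWithinAt.congr hfh (hfh self_mem_Ici)
    simpa only [Iic_union_Ici, hasDerivWithinAt_univ] using hleft.union hright
  · exact (hh hx.le).congr_of_eventuallyEq (hfh.eventuallyEq_of_mem (Ici_mem_nhds hx))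

section Correction

/-- The term `c * (1 + κ * (c - 2 * x))` by which `h_r` differs from a piece of the form `h_l` or
`A * exp (-√(2α) * x)`; here `κ = δ` up to `f₀ + c` and `κ = λ / α` beyond. -/
def correction (κ c x : ℝ) : ℝ :=
  c * (1 + κ * (c - 2 * x))

lemma hasDerivAt_correction (κ c x : ℝ) : HasDerivAt (correction κ c) (-(2 * κ * c)) x :=
  ((((((hasDerivAt_id x).const_mul 2).const_sub c).const_mul κ).const_add 1).const_mul
    c).congr_deriv (by ring)

lemma neg_le_liftSlope_correction {s κ c x : ℝ} (hs : 0 ≤ s) (hκ : 0 ≤ κ) (hc : 0 ≤ c)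
    (hx : 0 ≤ x) : -(4 * κ * c) ≤ liftSlope s (correction κ c) x := by
  have hexp : Real.exp (-(s * x)) ≤ 1 := Real.exp_le_one_iff.2 (neg_nonpos.2 (by positivity))
  have hmul_exp : s * x * Real.exp (-(s * x)) ≤ 1 :=
    (Real.mul_exp_neg_le_exp_neg_one _).trans (Real.exp_le_one_iff.2 (by norm_num))
  have hnonneg : 0 ≤ c * s * (1 + κ * c) * Real.exp (-(s * x)) := by positivity
  calc -(4 * κ * c) = -(2 * κ * c * (1 + 1)) := by ring
    _ ≤ -(2 * κ * c * (s * x * Real.exp (-(s * x)) + Real.exp (-(s * x)))) := by gcongr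
    _ ≤ c * s * (1 + κ * c) * Real.exp (-(s * x)) -
        2 * κ * c * (s * x * Real.exp (-(s * x)) + Real.exp (-(s * x))) := by linarith
    _ = liftSlope s (correction κ c) x := by
      rw [liftSlope_of_hasDerivAt (hasDerivAt_correction κ c x), correction]
      ring

end Correction

section Profiles

/-- The profile `h_l` of the left function: `H_l = logLift √(2α) h_l`. -/
noncomputable def leftProfile (α δ lam x : ℝ) : ℝ :=
  -(lam / α ^ 2) + (δ - lam / α) * x ^ 2

/-- The profile `h_r(·; c)` of the right function. The coefficient of the exponential beyond
`f₀ + c` is the one that makes the profile continuous; when the left slope vanishes at `f₀` it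
agrees with the formula for `B₀`, see `leftProfile_mul_exp_neg`. -/
noncomputable def rightProfile (α δ lam f₀ c x : ℝ) : ℝ :=
  if x ≤ f₀ + c then leftProfile α δ lam x + correction δ c x
  else leftProfile α δ lam f₀ * Real.exp (-(√(2 * α) * (x - (f₀ + c)))) +
    correction (lam / α) c x

variable {α δ lam f₀ c x : ℝ}

lemma hasDerivAt_leftProfile (α δ lam x : ℝ) :
    HasDerivAt (leftProfile α δ lam) (2 * (δ - lam / α) * x) x :=
  (((hasDerivAt_pow 2 x).const_mul (δ - lam / α)).const_add (-(lam / α ^ 2))).congr_deriv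
    (by norm_num; ring)

lemma deriv_leftProfile (α δ lam : ℝ) :
    deriv (leftProfile α δ lam) = fun x => 2 * (δ - lam / α) * x :=
  funext fun x => (hasDerivAt_leftProfile α δ lam x).deriv

lemma logLift_leftProfile (hα : 0 ≤ α) (y : ℝ) :
    logLift √(2 * α) (leftProfile α δ lam) y =
      √y * (-(lam / α ^ 2) + (δ - lam / α) / (8 * α) * Real.log y ^ 2) := by
  rw [logLift, leftProfile, div_pow, mul_pow, Real.sq_sqrt (by positivity)]
  ring

lemma leftProfile_le_leftProfile (hδ : lam / α ≤ δ) {z : ℝ} (hx : 0 ≤ x) (hxz : x ≤ z) :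
    leftProfile α δ lam x ≤ leftProfile α δ lam z := by
  have : 0 ≤ δ - lam / α := by linarith
  unfold leftProfile
  gcongr

lemma mul_sub_le_liftSlope_leftProfile_sub (hδ : lam / α ≤ δ) {r z : ℝ}
    (hr : leftProfile α δ lam r ≤ 0) (hx : 0 ≤ x) (hxz : x ≤ z) (hzr : z ≤ r) :
    2 * (δ - lam / α) * Real.exp (-(√(2 * α) * r)) * (z - x) ≤
      liftSlope √(2 * α) (leftProfile α δ lam) z - liftSlope √(2 * α) (leftProfile α δ lam) x := by
  have hderiv2 (u : ℝ) : HasDerivAt (deriv (leftProfile α δ lam)) (2 * (δ - lam / α)) u := by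
    rw [deriv_leftProfile]
    exact hasDerivAt_const_mul _
  exact mul_sub_le_liftSlope_sub (Real.sqrt_nonneg _) (by linarith)
    (fun u => (hasDerivAt_leftProfile α δ lam u).differentiableAt)
    (fun u => (hderiv2 u).differentiableAt)
    (fun u hu => (leftProfile_le_leftProfile hδ hu.1 hu.2).trans hr)
    (fun u _ => (hderiv2 u).deriv.ge) hx hxz hzr

lemma liftSlope_leftProfile_eq_zero_iff :
    liftSlope √(2 * α) (leftProfile α δ lam) x = 0 ↔
      √(2 * α) * leftProfile α δ lam x = -(2 * (δ - lam / α) * x) := by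
  rw [liftSlope_of_hasDerivAt (hasDerivAt_leftProfile α δ lam x),
    mul_eq_zero_iff_left (Real.exp_pos _).ne', add_eq_zero_iff_eq_neg]

lemma leftProfile_neg_of_liftSlope_eq_zero (hδ : lam / α < δ) (hx : 0 < x)
    (hslope : liftSlope √(2 * α) (leftProfile α δ lam) x = 0) : leftProfile α δ lam x < 0 := by
  have hpos : 0 < 2 * (δ - lam / α) * x := mul_pos (by linarith) hx
  have hmul := liftSlope_leftProfile_eq_zero_iff.1 hslope
  exact neg_of_mul_neg_right (by linarith) (Real.sqrt_nonneg (2 * α))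

lemma liftSlope_leftProfile_eq_zero (hα : 0 < α) (hlam : 0 ≤ lam) (hlt : lam < α * δ)
    (hx : x = 1 / √(2 * α) * (√((α * δ + lam) / (α * δ - lam)) - 1)) :
    liftSlope √(2 * α) (leftProfile α δ lam) x = 0 := by
  have hs : 0 < √(2 * α) := by positivity
  have hs_sq : √(2 * α) ^ 2 = 2 * α := Real.sq_sqrt (by positivity)
  have hsub : 0 < α * δ - lam := by linarith
  have hquad : (√(2 * α) * x + 1) ^ 2 * (α * δ - lam) = α * δ + lam := by
    have hx_add : √(2 * α) * x + 1 = √((α * δ + lam) / (α * δ - lam)) := by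
      rw [hx]
      field_simp
      ring
    rw [hx_add, Real.sq_sqrt (div_nonneg (by linarith) hsub.le), div_mul_cancel₀ _ hsub.ne']
  rw [liftSlope_leftProfile_eq_zero_iff, leftProfile]
  field_simp
  refine mul_left_cancel₀ hs.ne' ?_
  linear_combination α * hquad - lam * hs_sq

lemma leftProfile_mul_exp_neg (hα : 0 < α)
    (hf₀ : liftSlope √(2 * α) (leftProfile α δ lam) f₀ = 0) (c x : ℝ) :
    leftProfile α δ lam f₀ * Real.exp (-(√(2 * α) * (x - (f₀ + c)))) =
      -(2 * f₀ / (α * √(2 * α))) * (α * δ - lam) * Real.exp (f₀ * √(2 * α)) *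
        Real.exp (-(x - c) * √(2 * α)) := by
  have hs : 0 < √(2 * α) := by positivity
  have hcoeff : leftProfile α δ lam f₀ = -(2 * f₀ / (α * √(2 * α))) * (α * δ - lam) := by
    refine mul_left_cancel₀ hs.ne' ((liftSlope_leftProfile_eq_zero_iff.1 hf₀).trans ?_)
    field_simp
  rw [hcoeff, mul_assoc _ (Real.exp _), ← Real.exp_add]
  ring_nf

lemma leftProfile_add_correction_junction (α δ lam f₀ c : ℝ) :
    leftProfile α δ lam (f₀ + c) + correction δ c (f₀ + c) =
      leftProfile α δ lam f₀ + correction (lam / α) c (f₀ + c) := by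
  simp only [leftProfile, correction]
  ring

lemma rightProfile_of_le (hx : x ≤ f₀ + c) :
    rightProfile α δ lam f₀ c x = leftProfile α δ lam x + correction δ c x :=
  if_pos hx

lemma rightProfile_of_ge (hx : f₀ + c ≤ x) :
    rightProfile α δ lam f₀ c x =
      leftProfile α δ lam f₀ * Real.exp (-(√(2 * α) * (x - (f₀ + c)))) +
        correction (lam / α) c x := by
  rcases hx.eq_or_lt with rfl | hx
  · rw [rightProfile_of_le le_rfl, leftProfile_add_correction_junction, sub_self, mul_zero,
      neg_zero, Real.exp_zero, mul_one]
  · exact if_neg hx.not_ge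

lemma eq_rightProfile {g : ℝ → ℝ} (hα : 0 < α)
    (hf₀ : liftSlope √(2 * α) (leftProfile α δ lam) f₀ = 0)
    (hle : ∀ x ≤ f₀ + c,
      g x = δ * c * (c - 2 * x) + (δ - lam / α) * x ^ 2 + c - lam / α ^ 2)
    (hge : ∀ x ≥ f₀ + c, g x = lam / α * c * (c - 2 * x) + c +
      -(2 * f₀ / (α * √(2 * α))) * (α * δ - lam) * Real.exp (f₀ * √(2 * α)) *
        Real.exp (-(x - c) * √(2 * α))) :
    g = rightProfile α δ lam f₀ c := by
  funext x
  rcases le_total x (f₀ + c) with hx | hx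
  · rw [hle x hx, rightProfile_of_le hx, leftProfile, correction]
    ring
  · rw [hge x hx, rightProfile_of_ge hx, leftProfile_mul_exp_neg hα hf₀, correction]
    ring

lemma hasDerivAt_rightProfile (hf₀ : liftSlope √(2 * α) (leftProfile α δ lam) f₀ = 0) (c x : ℝ) :
    HasDerivAt (rightProfile α δ lam f₀ c)
      (if x ≤ f₀ + c then 2 * (δ - lam / α) * x + -(2 * δ * c)
        else -(√(2 * α) * leftProfile α δ lam f₀ * Real.exp (-(√(2 * α) * (x - (f₀ + c))))) +
          -(2 * (lam / α) * c)) x := by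
  refine hasDerivAt_of_eqOn_Iic_Ici (fun u hu => rightProfile_of_le hu)
    (fun u hu => rightProfile_of_ge hu) (fun hx => ?_) (fun hx => ?_)
  · rw [if_pos hx]
    exact (hasDerivAt_leftProfile α δ lam x).add (hasDerivAt_correction δ c x)
  · have hexp := (hasDerivAt_exp_neg_mul √(2 * α) (x - (f₀ + c))).comp_sub_const x (f₀ + c)
    refine ((hexp.const_mul (leftProfile α δ lam f₀)).add
      (hasDerivAt_correction (lam / α) c x)).congr_deriv ?_
    rcases hx.eq_or_lt with rfl | hx
    · rw [if_pos le_rfl, sub_self, mul_zero, neg_zero, Real.exp_zero]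
      linear_combination -(liftSlope_leftProfile_eq_zero_iff.1 hf₀)
    · rw [if_neg hx.not_ge]
      ring

lemma liftSlope_rightProfile_of_le (hf₀ : liftSlope √(2 * α) (leftProfile α δ lam) f₀ = 0)
    (hx : x ≤ f₀ + c) :
    liftSlope √(2 * α) (rightProfile α δ lam f₀ c) x =
      liftSlope √(2 * α) (leftProfile α δ lam) x + liftSlope √(2 * α) (correction δ c) x := by
  rw [liftSlope_of_hasDerivAt (hasDerivAt_rightProfile hf₀ c x), if_pos hx, rightProfile_of_le hx,
    liftSlope_of_hasDerivAt (hasDerivAt_leftProfile α δ lam x),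
    liftSlope_of_hasDerivAt (hasDerivAt_correction δ c x)]
  ring

lemma liftSlope_rightProfile_of_gt (hf₀ : liftSlope √(2 * α) (leftProfile α δ lam) f₀ = 0)
    (hx : f₀ + c < x) :
    liftSlope √(2 * α) (rightProfile α δ lam f₀ c) x =
      liftSlope √(2 * α) (correction (lam / α) c) x := by
  rw [liftSlope_of_hasDerivAt (hasDerivAt_rightProfile hf₀ c x), if_neg hx.not_ge,
    rightProfile_of_ge hx.le, liftSlope_of_hasDerivAt (hasDerivAt_correction (lam / α) c x)]
  ring

end Profiles

section Tangency

variable {α δ lam f₀ x₀ : ℝ}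

lemma mul_min_sub_le_of_liftSlope_eq {c r x₁ x₂ : ℝ} (hlam : 0 ≤ lam / α) (hδ : lam / α ≤ δ)
    (hf₀ : liftSlope √(2 * α) (leftProfile α δ lam) f₀ = 0) (hr : leftProfile α δ lam r ≤ 0)
    (hc : 0 ≤ c) (hcr : f₀ + c ≤ r) (hx₁ : 0 ≤ x₁) (hx₁f : x₁ ≤ f₀) (hx : x₁ ≤ x₂)
    (hslope : liftSlope √(2 * α) (leftProfile α δ lam) x₁ =
      liftSlope √(2 * α) (rightProfile α δ lam f₀ c) x₂) :
    2 * (δ - lam / α) * Real.exp (-(√(2 * α) * r)) * (min x₂ f₀ - x₁) ≤ 4 * δ * c := by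
  have hs : 0 ≤ √(2 * α) := Real.sqrt_nonneg _
  rcases le_or_gt x₂ (f₀ + c) with hx₂ | hx₂
  · rw [liftSlope_rightProfile_of_le hf₀ hx₂] at hslope
    have hexpand := mul_sub_le_liftSlope_leftProfile_sub hδ hr hx₁ hx (hx₂.trans hcr)
    have hcorr := neg_le_liftSlope_correction hs (hlam.trans hδ) hc (hx₁.trans hx)
    have hrate : 0 ≤ 2 * (δ - lam / α) * Real.exp (-(√(2 * α) * r)) :=
      mul_nonneg (by linarith) (Real.exp_pos _).le
    calc _ ≤ 2 * (δ - lam / α) * Real.exp (-(√(2 * α) * r)) * (x₂ - x₁) :=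
          mul_le_mul_of_nonneg_left (sub_le_sub_right (min_le_left _ _) _) hrate
      _ ≤ 4 * δ * c := by linarith
  · rw [liftSlope_rightProfile_of_gt hf₀ hx₂] at hslope
    have hexpand := mul_sub_le_liftSlope_leftProfile_sub hδ hr hx₁ hx₁f (by linarith)
    have hcorr := neg_le_liftSlope_correction hs hlam hc (hx₁.trans hx)
    have hκ : lam / α * c ≤ δ * c := by gcongr
    rw [min_eq_right (by linarith)]
    linarith

lemma exists_abs_sub_le_mul_of_liftSlope_eq (hlam : 0 ≤ lam / α) (hδ : lam / α < δ)
    (hf₀pos : 0 < f₀) (hf₀ : liftSlope √(2 * α) (leftProfile α δ lam) f₀ = 0) (hx₀ : x₀ < f₀) :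
    ∃ C > 0, ∃ cbar > 0, ∀ c, 0 < c → c < cbar → ∀ x₁ x₂, 0 ≤ x₁ → x₁ ≤ x₀ + c / 2 →
      x₀ + c / 2 ≤ x₂ → liftSlope √(2 * α) (leftProfile α δ lam) x₁ =
        liftSlope √(2 * α) (rightProfile α δ lam f₀ c) x₂ →
      |x₁ - x₀| ≤ C * c ∧ |x₂ - x₀| ≤ C * c := by
  obtain ⟨r, hfr, hr⟩ : ∃ r > f₀, leftProfile α δ lam r < 0 :=
    ((hasDerivAt_leftProfile α δ lam f₀).continuousAt.eventually_lt_const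
      (leftProfile_neg_of_liftSlope_eq_zero hδ hf₀pos hf₀)).exists_gt
  obtain ⟨m, hm_eq⟩ : ∃ m, m = 2 * (δ - lam / α) * Real.exp (-(√(2 * α) * r)) := ⟨_, rfl⟩
  have hm : 0 < m := hm_eq ▸ mul_pos (by linarith) (Real.exp_pos _)
  have hK : 0 < 4 * δ / m := div_pos (by linarith) hm
  refine ⟨4 * δ / m + 1, by positivity, min (r - f₀) ((f₀ - x₀) / (4 * δ / m + 1)),
    lt_min (by linarith) (div_pos (by linarith) (by positivity)), ?_⟩
  intro c hc hcbar x₁ x₂ hx₁ hx₁c hx₂c hslope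
  obtain ⟨hcr, hcf⟩ := lt_min_iff.1 hcbar
  rw [lt_div_iff₀' (by positivity), add_one_mul] at hcf
  have hKc : 0 < 4 * δ / m * c := mul_pos hK hc
  have hgap : min x₂ f₀ - x₁ ≤ 4 * δ / m * c := by
    rw [div_mul_eq_mul_div, le_div_iff₀' hm, hm_eq]
    exact mul_min_sub_le_of_liftSlope_eq hlam hδ.le hf₀ hr.le hc.le (by linarith) hx₁
      (by linarith) (hx₁c.trans hx₂c) hslope
  have hx₂f : x₂ < f₀ := by
    by_contra! hle
    rw [min_eq_right hle] at hgap
    linarith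
  rw [min_eq_left hx₂f.le] at hgap
  exact ⟨abs_le.2 ⟨by linarith, by linarith⟩, abs_le.2 ⟨by linarith, by linarith⟩⟩

theorem stmt_11_general (hα : 0 < α) (hlam : 0 ≤ lam) (hlt : lam < α * δ) (hf₀pos : 0 < f₀)
    (hf₀ : liftSlope √(2 * α) (leftProfile α δ lam) f₀ = 0) (hx₀ : x₀ < f₀) {ε : ℝ} (hε : 0 < ε) :
    ∃ cbar > 0, ∀ c, 0 < c → c < cbar → ∀ y₁ y₂, 1 ≤ y₁ →
      y₁ ≤ Real.exp (2 * √(2 * α) * (x₀ + c / 2)) → Real.exp (2 * √(2 * α) * (x₀ + c / 2)) ≤ y₂ →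
      deriv (logLift √(2 * α) (leftProfile α δ lam)) y₁ =
        deriv (logLift √(2 * α) (rightProfile α δ lam f₀ c)) y₂ →
      |y₁ - Real.exp (2 * √(2 * α) * x₀)| < ε ∧ |y₂ - Real.exp (2 * √(2 * α) * x₀)| < ε := by
  have hs : 0 < √(2 * α) := by positivity
  have hcont : ContinuousAt (fun x => Real.exp (2 * √(2 * α) * x)) x₀ := by fun_prop
  obtain ⟨η, hη, hηε⟩ := Metric.continuousAt_iff.1 hcont ε hε
  obtain ⟨C, hC, cbar, hcbar, hlinear⟩ := exists_abs_sub_le_mul_of_liftSlope_eq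
    (div_nonneg hlam hα.le) ((div_lt_iff₀' hα).2 hlt) hf₀pos hf₀ hx₀
  refine ⟨min cbar (η / C), lt_min hcbar (by positivity), ?_⟩
  intro c hc hcmin y₁ y₂ hy₁ hy₁c hy₂c hderiv
  obtain ⟨hccbar, hcη⟩ := lt_min_iff.1 hcmin
  have exists_exp_eq {y : ℝ} (hy : 0 < y) : ∃ x, Real.exp (2 * √(2 * α) * x) = y :=
    ⟨Real.log y / (2 * √(2 * α)), by rw [mul_div_cancel₀ _ (by positivity), Real.exp_log hy]⟩
  obtain ⟨x₁, rfl⟩ := exists_exp_eq (one_pos.trans_le hy₁)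
  obtain ⟨x₂, rfl⟩ := exists_exp_eq ((Real.exp_pos _).trans_le hy₂c)
  rw [deriv_logLift_exp hs.ne' (hasDerivAt_leftProfile α δ lam x₁).differentiableAt,
    deriv_logLift_exp hs.ne' (hasDerivAt_rightProfile hf₀ c x₂).differentiableAt,
    div_left_inj' (by positivity)] at hderiv
  rw [Real.exp_le_exp, mul_le_mul_iff_right₀ (by positivity)] at hy₁c hy₂c
  have hx₁ : 0 ≤ x₁ := nonneg_of_mul_nonneg_right (Real.one_le_exp_iff.1 hy₁) (by positivity)
  obtain ⟨hx₁x₀, hx₂x₀⟩ := hlinear c hc hccbar x₁ x₂ hx₁ hy₁c hy₂c hderiv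
  have hCc : C * c < η := (lt_div_iff₀' hC).1 hcη
  exact ⟨hηε (hx₁x₀.trans_lt hCc), hηε (hx₂x₀.trans_lt hCc)⟩

end Tangency

/-- both components of the tangency pair converge to Ψ(1/(2δ)) as c → 0. -/
theorem stmt_11 (α δ lam : ℝ) (hα : 0 < α) (hδ : 0 < δ) (hlam : 0 < lam)
    (hltd : lam < α * δ)
    (f₀ : ℝ)
    (hf₀ : f₀ = (1 / Real.sqrt (2 * α)) * (Real.sqrt ((α * δ + lam) / (α * δ - lam)) - 1))
    (hf₀big : α / (2 * lam) < f₀)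
    (Ψ : ℝ → ℝ) (hΨ : ∀ x, Ψ x = Real.exp (2 * Real.sqrt (2 * α) * x))
    (Hl : ℝ → ℝ)
    (hHl : ∀ y, 0 < y → Hl y = Real.sqrt y *
      (-(lam / α ^ 2) + ((δ - lam / α) / (8 * α)) * (Real.log y) ^ 2))
    (B₀ : ℝ)
    (hB₀ : B₀ = -(2 * f₀ / (α * Real.sqrt (2 * α))) * (α * δ - lam) *
      Real.exp (f₀ * Real.sqrt (2 * α)))
    (hr1 hr2 hr Hr : ℝ → ℝ → ℝ)
    (hhr1 : ∀ c x, hr1 c x = δ * c * (c - 2 * x) + (δ - lam / α) * x ^ 2 + c - lam / α ^ 2)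
    (hhr2 : ∀ c x, hr2 c x = (lam / α) * c * (c - 2 * x) + c +
      B₀ * Real.exp (-(x - c) * Real.sqrt (2 * α)))
    (hhra : ∀ c x, x ≤ f₀ + c → hr c x = hr1 c x)
    (hhrb : ∀ c x, f₀ + c ≤ x → hr c x = hr2 c x)
    (hHr : ∀ c y, 0 < y → Hr c y = Real.sqrt y * hr c (Real.log y / (2 * Real.sqrt (2 * α))))
    (xv : ℝ → ℝ)
    (hxv : ∀ c, 0 < c →
      (xv c < f₀ + c ∧
        δ - (α * δ - lam) * (xv c) ^ 2 + c * α * (δ * (2 * xv c - c) - 1) = 0 ∧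
        ∀ x, x < f₀ + c →
          δ - (α * δ - lam) * x ^ 2 + c * α * (δ * (2 * x - c) - 1) = 0 → x = xv c)) :
    ∀ ε > (0 : ℝ), ∃ cbar > (0 : ℝ), ∀ c, 0 < c → c < cbar → ∀ y₁ y₂ : ℝ,
      1 < y₁ → y₁ < Ψ (1 / (2 * δ) + c / 2) →
      Ψ (1 / (2 * δ) + c / 2) ≤ max (Ψ (1 / (2 * δ) + c / 2)) (Ψ (xv c)) →
      max (Ψ (1 / (2 * δ) + c / 2)) (Ψ (xv c)) < y₂ →
      TangencySystem Hl (Hr c) y₁ y₂ →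
      |y₁ - Ψ (1 / (2 * δ))| < ε ∧ |y₂ - Ψ (1 / (2 * δ))| < ε := by
  obtain rfl : Ψ = fun x => Real.exp (2 * √(2 * α) * x) := funext hΨ
  have hroot := liftSlope_leftProfile_eq_zero hα hlam.le hltd hf₀
  have hx₀ : 1 / (2 * δ) < f₀ := hf₀big.trans' <| by
    rw [div_lt_div_iff₀ (by positivity) (by positivity)]
    linarith
  have hHl_eq : EqOn Hl (logLift √(2 * α) (leftProfile α δ lam)) (Ioi 0) := fun y hy =>
    (hHl y hy).trans (logLift_leftProfile hα.le y).symm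
  have hhr_eq (c : ℝ) : hr c = rightProfile α δ lam f₀ c :=
    eq_rightProfile hα hroot (fun x hx => (hhra c x hx).trans (hhr1 c x))
      (fun x hx => by rw [hhrb c x hx, hhr2, hB₀])
  have hHr_eq (c : ℝ) : EqOn (Hr c) (logLift √(2 * α) (rightProfile α δ lam f₀ c)) (Ioi 0) :=
    fun y hy => hhr_eq c ▸ hHr c y hy
  intro ε hε
  obtain ⟨cbar, hcbar, hclose⟩ :=
    stmt_11_general hα hlam.le hltd (hx₀.trans' (by positivity)) hroot hx₀ hε
  refine ⟨cbar, hcbar, fun c hc hccbar y₁ y₂ hy₁ hy₁c _ hy₂c htan => ?_⟩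
  replace hy₂c := (le_max_left _ _).trans_lt hy₂c
  refine hclose c hc hccbar y₁ y₂ hy₁.le hy₁c.le hy₂c.le ?_
  rw [← hHl_eq.deriv isOpen_Ioi (one_pos.trans hy₁),
    ← (hHr_eq c).deriv isOpen_Ioi ((Real.exp_pos _).trans hy₂c)]
  exact htan.1
end
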